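/- Let B be an envelope of the Banach algebra A, X a Banach B-bimodule, and D : A → X a bounded derivation. Suppose the closed linear span of {ac : a, c ∈ A} equals A. If Δ : B → Δ(X), Δ(b) = (𝓛(b), 𝓡(b)), is ANY bounded derivation (with respect to the B-bimodule structure b·(L, R) = (a ↦ b·L(a), a ↦ R(ab)), (L, R)·b = (a ↦ L(ba), a ↦ R(a)·b) on the space Δ(X) of double centralizers) satisfying Δ(ι(a)) = ι_X(D(a)) for all a ∈ A, then necessarily 𝓛(b)(a) = D(ba) − b·D(a) and 𝓡(b)(a) = D(ab) − D(a)·b for all b ∈ B, a ∈ A; in other words, the extension D̃ of D to B is uniquely determined by D. -/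

import Mathlib

/-!
On products of elements of `A`, the Leibniz rule expresses `Δ b` through the values of `Δ` on
`ι(A)`: `Δ(b)₁(ac) = Δ(b·ι(a))₁(c) - b·Δ(ι(a))₁(c)`, and symmetrically for the second component,
where `b·ι(a)` lies in `ι(A)` because `A` is an ideal. As products span a dense subspace, a map
satisfying the Leibniz rule is determined by its restriction to `A`. The push-out `D̃` satisfies the
Leibniz rule because it is the inner derivation `b ↦ P·b - b·P` for the pair `P = (D, -D)`, and it
restricts to `ι_X ∘ D` because `D` is a derivation.
-/

noncomputable section

/-- A Banach `A`-bimodule structure on a Banach space `X`: bounded bilinear left and right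
actions (encoded as continuous linear maps `l`, `r`, where `l a x = a·x` and `r a x = x·a`)
satisfying `(ab)·x = a·(b·x)`, `x·(ab) = (x·a)·b` and `(a·x)·b = a·(x·b)`. -/
structure BanachBimodule (A X : Type*) [NonUnitalNormedRing A] [NormedSpace ℂ A]
    [NormedAddCommGroup X] [NormedSpace ℂ X] where
  l : A →L[ℂ] X →L[ℂ] X
  r : A →L[ℂ] X →L[ℂ] X
  l_mul : ∀ a b x, l (a * b) x = l a (l b x)
  r_mul : ∀ a b x, r (a * b) x = r b (r a x)
  l_r : ∀ a b x, r b (l a x) = l a (r b x)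

variable {A X : Type*} [NonUnitalNormedRing A] [NormedSpace ℂ A]
  [IsScalarTower ℂ A A] [SMulCommClass ℂ A A] [CompleteSpace A]
  [NormedAddCommGroup X] [NormedSpace ℂ X] [CompleteSpace X]

/-- `(S, T)` is a double centralizer from `A` into `X`:
`S(αa) = S(α)·a`, `T(aα) = a·T(α)` and `a·S(α) = T(a)·α`. -/
def IsDoubleCentralizer (M : BanachBimodule A X) (S T : A →L[ℂ] X) : Prop :=
  (∀ α a : A, S (α * a) = M.r a (S α)) ∧
  (∀ a α : A, T (a * α) = M.l a (T α)) ∧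
  (∀ a α : A, M.l a (S α) = M.r α (T a))

/-- The canonical bounded linear map `ι_X : x ↦ (L_x, R_x)` where `L_x a = x·a`,
`R_x a = a·x`. -/
def iotaDC (M : BanachBimodule A X) : X →L[ℂ] (A →L[ℂ] X) × (A →L[ℂ] X) :=
  M.r.flip.prod M.l.flip

/-- `B` is an *envelope* of `A`: `A` is a two-sided ideal of `B` with bounded injective
inclusion `incl : A → B be` (an algebra homomorphism), the products `ba` and `ab`
(`b ∈ B`, `a ∈ A`) are given by `lmul b a` and `rmul b a` inside `A`, and
`max (‖ba‖, ‖ab‖) ≤ C·‖a‖·‖b‖` for some `C > 0`. -/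
structure Envelope (A B : Type*) [NonUnitalNormedRing A] [NormedSpace ℂ A]
    [NonUnitalNormedRing B] [NormedSpace ℂ B] where
  incl : A →L[ℂ] B
  incl_mul : ∀ a c : A, incl (a * c) = incl a * incl c
  incl_inj : Function.Injective incl
  lmul : B →L[ℂ] A →L[ℂ] A
  rmul : B →L[ℂ] A →L[ℂ] A
  incl_lmul : ∀ (b : B) (a : A), incl (lmul b a) = b * incl a
  incl_rmul : ∀ (b : B) (a : A), incl (rmul b a) = incl a * b
  norm_bound : ∃ C > 0, ∀ (b : B) (a : A), max ‖lmul b a‖ ‖rmul b a‖ ≤ C * ‖a‖ * ‖b‖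

variable {B : Type*} [NonUnitalNormedRing B] [NormedSpace ℂ B]
  [IsScalarTower ℂ B B] [SMulCommClass ℂ B B] [CompleteSpace B]

/-- Restriction of a Banach `B`-bimodule structure along the inclusion `A → B`,
making `X` a Banach `A`-bimodule. -/
def BanachBimodule.restrict (M : BanachBimodule B X) (E : Envelope A B) :
    BanachBimodule A X where
  l := M.l.comp E.incl
  r := M.r.comp E.incl
  l_mul := by
    intro a b x
    simp only [ContinuousLinearMap.comp_apply, E.incl_mul, M.l_mul]
  r_mul := by
    intro a b x
    simp only [ContinuousLinearMap.comp_apply, E.incl_mul, M.r_mul]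
  l_r := by
    intro a b x
    simp only [ContinuousLinearMap.comp_apply, M.l_r]

/-- The left `B`-action `b·(L, R) = (a ↦ b·L(a), a ↦ R(ab))` on pairs. -/
def bSmulLeft (E : Envelope A B) (M : BanachBimodule B X) (b : B)
    (p : (A →L[ℂ] X) × (A →L[ℂ] X)) : (A →L[ℂ] X) × (A →L[ℂ] X) :=
  ((M.l b).comp p.1, p.2.comp (E.rmul b))

/-- The right `B`-action `(L, R)·b = (a ↦ L(ba), a ↦ R(a)·b)` on pairs. -/
def bSmulRight (E : Envelope A B) (M : BanachBimodule B X)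
    (p : (A →L[ℂ] X) × (A →L[ℂ] X)) (b : B) : (A →L[ℂ] X) × (A →L[ℂ] X) :=
  (p.1.comp (E.lmul b), (M.r b).comp p.2)

/-- The push-out map `D̃ : b ↦ (𝓛(b), 𝓡(b))`, with `𝓛(b)(a) = D(ba) − b·D(a)` and
`𝓡(b)(a) = D(ab) − D(a)·b`. -/
def pushOut (E : Envelope A B) (M : BanachBimodule B X) (D : A →L[ℂ] X) (b : B) :
    (A →L[ℂ] X) × (A →L[ℂ] X) :=
  (D.comp (E.lmul b) - (M.l b).comp D, D.comp (E.rmul b) - (M.r b).comp D)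

theorem ext_of_dense_span_mul {R A X : Type*} [Semiring R] [TopologicalSpace A] [AddCommMonoid A]
    [Mul A] [Module R A] [ContinuousAdd A] [ContinuousConstSMul R A] [TopologicalSpace X]
    [T2Space X] [AddCommMonoid X] [Module R X] {f g : A →L[R] X}
    (hspan : (Submodule.span R {x : A | ∃ a c : A, a * c = x}).topologicalClosure = ⊤)
    (hfg : ∀ a c : A, f (a * c) = g (a * c)) : f = g := by
  refine ContinuousLinearMap.ext_on (Submodule.dense_iff_topologicalClosure_eq_top.2 hspan) ?_
  rintro _ ⟨a, c, rfl⟩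
  exact hfg a c

section

omit [IsScalarTower ℂ A A] [SMulCommClass ℂ A A] [CompleteSpace A] [CompleteSpace X]
  [IsScalarTower ℂ B B] [SMulCommClass ℂ B B] [CompleteSpace B]

namespace Envelope

theorem lmul_incl (E : Envelope A B) (a c : A) : E.lmul (E.incl a) c = a * c :=
  E.incl_inj (by rw [E.incl_lmul, E.incl_mul])

theorem rmul_incl (E : Envelope A B) (a c : A) : E.rmul (E.incl a) c = c * a :=
  E.incl_inj (by rw [E.incl_rmul, E.incl_mul])

theorem lmul_mul (E : Envelope A B) (b₁ b₂ : B) (a : A) :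
    E.lmul (b₁ * b₂) a = E.lmul b₁ (E.lmul b₂ a) :=
  E.incl_inj (by simp only [E.incl_lmul, mul_assoc])

theorem rmul_mul (E : Envelope A B) (b₁ b₂ : B) (a : A) :
    E.rmul (b₁ * b₂) a = E.rmul b₂ (E.rmul b₁ a) :=
  E.incl_inj (by simp only [E.incl_rmul, mul_assoc])

end Envelope

/-- The Leibniz rule for a map from `B` to pairs of operators `A → X`, with respect to the actions
`bSmulLeft` and `bSmulRight`. Only the product rule is recorded, so that derivations are the bounded
linear maps with this property whose values are double centralizers. -/
def IsLeibniz (E : Envelope A B) (M : BanachBimodule B X)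
    (Δ : B → (A →L[ℂ] X) × (A →L[ℂ] X)) : Prop :=
  ∀ b₁ b₂ : B, Δ (b₁ * b₂) = bSmulLeft E M b₁ (Δ b₂) + bSmulRight E M (Δ b₁) b₂

variable {E : Envelope A B} {M : BanachBimodule B X} {D : A →L[ℂ] X}

namespace IsLeibniz

variable {Δ Δ' : B → (A →L[ℂ] X) × (A →L[ℂ] X)}

theorem fst_apply_mul (hΔ : IsLeibniz E M Δ) (b : B) (a c : A) :
    (Δ b).1 (a * c) = (Δ (E.incl (E.lmul b a))).1 c - M.l b ((Δ (E.incl a)).1 c) := by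
  have leibniz : (Δ (b * E.incl a)).1 c =
      M.l b ((Δ (E.incl a)).1 c) + (Δ b).1 (E.lmul (E.incl a) c) :=
    DFunLike.congr_fun (congrArg Prod.fst (hΔ b (E.incl a))) c
  rw [E.incl_lmul, leibniz, E.lmul_incl, add_sub_cancel_left]

theorem snd_apply_mul (hΔ : IsLeibniz E M Δ) (b : B) (a c : A) :
    (Δ b).2 (a * c) = (Δ (E.incl (E.rmul b c))).2 a - M.r b ((Δ (E.incl c)).2 a) := by
  have leibniz : (Δ (E.incl c * b)).2 a =
      (Δ b).2 (E.rmul (E.incl c) a) + M.r b ((Δ (E.incl c)).2 a) :=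
    DFunLike.congr_fun (congrArg Prod.snd (hΔ (E.incl c) b)) a
  rw [E.incl_rmul, leibniz, E.rmul_incl, add_sub_cancel_right]

theorem eq_of_eq_on_incl (hΔ : IsLeibniz E M Δ) (hΔ' : IsLeibniz E M Δ')
    (hspan : (Submodule.span ℂ {x : A | ∃ a c : A, a * c = x}).topologicalClosure = ⊤)
    (heq : ∀ a : A, Δ (E.incl a) = Δ' (E.incl a)) : Δ = Δ' := by
  funext b
  refine Prod.ext (ext_of_dense_span_mul hspan fun a c => ?_)
    (ext_of_dense_span_mul hspan fun a c => ?_)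
  · rw [hΔ.fst_apply_mul, hΔ'.fst_apply_mul, heq, heq]
  · rw [hΔ.snd_apply_mul, hΔ'.snd_apply_mul, heq, heq]

end IsLeibniz

theorem isLeibniz_pushOut (E : Envelope A B) (M : BanachBimodule B X) (D : A →L[ℂ] X) :
    IsLeibniz E M (pushOut E M D) := by
  intro b₁ b₂
  refine Prod.ext (ContinuousLinearMap.ext fun a => ?_) (ContinuousLinearMap.ext fun a => ?_)
  · change D (E.lmul (b₁ * b₂) a) - M.l (b₁ * b₂) (D a) =
      M.l b₁ (D (E.lmul b₂ a) - M.l b₂ (D a)) +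
        (D (E.lmul b₁ (E.lmul b₂ a)) - M.l b₁ (D (E.lmul b₂ a)))
    rw [E.lmul_mul, M.l_mul, map_sub]
    abel
  · change D (E.rmul (b₁ * b₂) a) - M.r (b₁ * b₂) (D a) =
      (D (E.rmul b₂ (E.rmul b₁ a)) - M.r b₂ (D (E.rmul b₁ a))) +
        M.r b₂ (D (E.rmul b₁ a) - M.r b₁ (D a))
    rw [E.rmul_mul, M.r_mul, map_sub]
    abel

theorem pushOut_incl
    (hD : ∀ a c : A, D (a * c) = M.l (E.incl a) (D c) + M.r (E.incl c) (D a)) (a : A) :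
    pushOut E M D (E.incl a) = iotaDC (M.restrict E) (D a) := by
  refine Prod.ext (ContinuousLinearMap.ext fun c => ?_) (ContinuousLinearMap.ext fun c => ?_)
  · change D (E.lmul (E.incl a) c) - M.l (E.incl a) (D c) = M.r (E.incl c) (D a)
    rw [E.lmul_incl, hD, add_sub_cancel_left]
  · change D (E.rmul (E.incl a) c) - M.r (E.incl a) (D c) = M.l (E.incl c) (D a)
    rw [E.rmul_incl, hD, add_sub_cancel_right]

theorem statement7_general
    (hD : ∀ a c : A, D (a * c) = M.l (E.incl a) (D c) + M.r (E.incl c) (D a))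
    (hspan : (Submodule.span ℂ {x : A | ∃ a c : A, a * c = x}).topologicalClosure = ⊤)
    {Δ : B → (A →L[ℂ] X) × (A →L[ℂ] X)} (hder : IsLeibniz E M Δ)
    (hcomm : ∀ a : A, Δ (E.incl a) = iotaDC (M.restrict E) (D a)) :
    Δ = pushOut E M D :=
  hder.eq_of_eq_on_incl (isLeibniz_pushOut E M D) hspan fun a =>
    (hcomm a).trans (pushOut_incl hD a).symm

end

/-- Uniqueness of the extension: if the closed linear span of products is all of `A` and
`Δ : B → Δ(X)` is ANY bounded derivation satisfying `Δ(ι(a)) = ι_X(D(a))`, then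
`Δ(b) = (𝓛(b), 𝓡(b))`, i.e. `Δ(b).1 a = D(ba) − b·D(a)` and `Δ(b).2 a = D(ab) − D(a)·b`. -/
theorem statement7 (E : Envelope A B) (M : BanachBimodule B X) (D : A →L[ℂ] X)
    (hD : ∀ a c : A, D (a * c) = M.l (E.incl a) (D c) + M.r (E.incl c) (D a))
    (hspan : (Submodule.span ℂ {x : A | ∃ a c : A, a * c = x}).topologicalClosure = ⊤)
    (Δ : B → (A →L[ℂ] X) × (A →L[ℂ] X))
    (hDC : ∀ b : B, IsDoubleCentralizer (M.restrict E) (Δ b).1 (Δ b).2)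
    (hadd : ∀ b₁ b₂ : B, Δ (b₁ + b₂) = Δ b₁ + Δ b₂)
    (hsmul : ∀ (c : ℂ) (b : B), Δ (c • b) = c • Δ b)
    (hbdd : ∃ K : ℝ, ∀ b : B, ‖Δ b‖ ≤ K * ‖b‖)
    (hder : ∀ b₁ b₂ : B,
      Δ (b₁ * b₂) = bSmulLeft E M b₁ (Δ b₂) + bSmulRight E M (Δ b₁) b₂)
    (hcomm : ∀ a : A, Δ (E.incl a) = iotaDC (M.restrict E) (D a)) :
    ∀ (b : B) (a : A),
      (Δ b).1 a = D (E.lmul b a) - M.l b (D a) ∧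
      (Δ b).2 a = D (E.rmul b a) - M.r b (D a) := by
  rw [statement7_general hD hspan hder hcomm]
  exact fun b a => ⟨rfl, rfl⟩
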